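/- Let z > 0, b, c ∈ (0,1], and let p(x) = c x + (1−b)(1−x). Suppose F_L = F_R = Beta(1,z). Then the Markov chain X with kernel κ is ergodic and its unique invariant (stationary) distribution is Beta(bz, cz). -/

import Mathlib

/-!
Invariance of `Beta(bz, cz)` is a flux balance. A probability measure `μ` is invariant as soon as,
for every level `t`, the mass moved from above `t` to at most `t` in one step equals the mass moved
the other way (`invariant_of_flux`). Since `P(1 - L ≤ s) = s^z` for `L ∼ Beta(1,z)`, both flows are
integrals of explicit functions with elementary antiderivatives, constant multiples of
`x^((b-1)z) (1-x)^(cz)` and `x^(bz) (1-x)^((c-1)z)`, and both equal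
`t^(bz) (1-t)^(cz) / (z B(bz, cz))` (`flux_down`, `flux_up`).

Ergodicity comes from a one-step Doeblin condition: `p x ≥ c x` and `1 - p x ≥ b (1 - x)`, so from
every `x ∈ [0,1]` the kernel dominates a fixed positive multiple of Lebesgue measure on
`(1/4, 3/4)` (`mcKernel_doeblin`). Each step then shrinks the oscillation of test functions by a
factor `q < 1`, so any two laws of the chain differ by at most `q^n` on every event after `n` steps
(`doeblin_iterate`), which gives both uniqueness and convergence in total variation
(`doeblin_ergodic`).
-/

open MeasureTheory Filter Topology Set

/-- The one-step Markov kernel of the chain. -/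
noncomputable def mcKernel (FL FR : Measure ℝ) (p : ℝ → ℝ) (x : ℝ) : Measure ℝ :=
  Measure.map (fun w : ℝ × ℝ × ℝ => if w.2.2 < p x then x - x * w.1 else x + (1 - x) * w.2.1)
    (FL.prod (FR.prod (volume.restrict (Icc (0 : ℝ) 1))))

/-- The `n`-step law of the chain with one-step kernel `κ` started at `x`. -/
noncomputable def iterLaw (κ : ℝ → Measure ℝ) (x : ℝ) : ℕ → Measure ℝ
  | 0 => Measure.dirac x
  | n + 1 => (iterLaw κ x n).bind κ

/-- The total variation distance between two measures. -/
noncomputable def tvDist (μ ν : Measure ℝ) : ℝ :=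
  ⨆ B : {B : Set ℝ // MeasurableSet B}, |(μ B.1).toReal - (ν B.1).toReal|

/-- The beta distribution `Beta(a,b)` on `(0,1)`. -/
noncomputable def betaMeasure (a b : ℝ) : Measure ℝ :=
  volume.withDensity fun x =>
    indicator (Ioo (0 : ℝ) 1)
      (fun z => ENNReal.ofReal
        (z ^ (a - 1) * (1 - z) ^ (b - 1) / ∫ u in (0 : ℝ)..1, u ^ (a - 1) * (1 - u) ^ (b - 1))) x

/-! ### Beta measures -/

lemma integral_beta_eq {a b : ℝ} (ha : 0 < a) (hb : 0 < b) :
    ∫ u in (0 : ℝ)..1, u ^ (a - 1) * (1 - u) ^ (b - 1) = ProbabilityTheory.beta a b := by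
  rw [ProbabilityTheory.beta_eq_betaIntegralReal a b ha hb, Complex.betaIntegral,
    intervalIntegral.integral_of_le (by norm_num), intervalIntegral.integral_of_le (by norm_num),
    ← RCLike.re_to_complex, ← integral_re]
  · refine setIntegral_congr_fun measurableSet_Ioc fun x ⟨hx1, hx₂⟩ ↦ ?_
    norm_cast
    rw [← Complex.ofReal_cpow, ← Complex.ofReal_cpow, RCLike.re_to_complex,
      Complex.re_mul_ofReal, Complex.ofReal_re]
    all_goals linarith
  · have h := Complex.betaIntegral_convergent (u := a) (v := b) (by simpa) (by simpa)
    rwa [intervalIntegrable_iff_integrableOn_Ioc_of_le (by simp), IntegrableOn] at h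

lemma betaMeasure_eq {a b : ℝ} (ha : 0 < a) (hb : 0 < b) :
    betaMeasure a b = (volume.restrict (Ioo 0 1)).withDensity fun x : ℝ =>
      ENNReal.ofReal (x ^ (a - 1) * (1 - x) ^ (b - 1) / ProbabilityTheory.beta a b) := by
  rw [betaMeasure, integral_beta_eq ha hb, ← withDensity_indicator measurableSet_Ioo]

lemma isProbabilityMeasure_beta {a b : ℝ} (ha : 0 < a) (hb : 0 < b) :
    IsProbabilityMeasure (betaMeasure a b) := by
  constructor
  rw [betaMeasure_eq ha hb, withDensity_apply _ MeasurableSet.univ, Measure.restrict_univ,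
    ← ProbabilityTheory.lintegral_betaPDF_eq_one ha hb, ProbabilityTheory.lintegral_betaPDF]
  congr! 3
  ring

lemma betaMeasure_compl {a b : ℝ} (ha : 0 < a) (hb : 0 < b) :
    betaMeasure a b (Ioo 0 1)ᶜ = 0 := by
  rw [betaMeasure_eq ha hb]
  exact (withDensity_absolutelyContinuous _ _)
    (by simp [Measure.restrict_apply measurableSet_Ioo.compl])

lemma betaMeasure_one_eq {z : ℝ} (hz : 0 < z) :
    betaMeasure 1 z = (volume.restrict (Ioo 0 1)).withDensity fun x : ℝ =>
      ENNReal.ofReal (z * (1 - x) ^ (z - 1)) := by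
  rw [betaMeasure_eq one_pos hz]
  have : ProbabilityTheory.beta 1 z = 1 / z := by
    rw [ProbabilityTheory.beta, Real.Gamma_one, add_comm, Real.Gamma_add_one hz.ne']
    have := (Real.Gamma_pos_of_pos hz).ne'
    field_simp
  congr! 3
  rw [this]
  simp
  ring

/-- Fundamental theorem of calculus for a nonnegative derivative that may blow up at the
endpoints, as a lower Lebesgue integral. -/
lemma lintegral_deriv {F f : ℝ → ℝ} {s t : ℝ} (hst : s ≤ t) (hF : ContinuousOn F (Icc s t))
    (hd : ∀ x ∈ Ioo s t, HasDerivAt F (f x) x) (hf : ∀ x ∈ Ioo s t, 0 ≤ f x) :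
    ∫⁻ x in Ioo s t, ENNReal.ofReal (f x) = ENNReal.ofReal (F t - F s) := by
  have hi := intervalIntegral.integrableOn_deriv_of_nonneg hF hd hf
  rw [← intervalIntegral.integral_eq_sub_of_hasDerivAt_of_le hst hF hd
    ((intervalIntegrable_iff_integrableOn_Ioc_of_le hst).2 hi),
    intervalIntegral.integral_of_le hst, integral_Ioc_eq_integral_Ioo,
    ofReal_integral_eq_lintegral_ofReal (hi.mono_set Ioo_subset_Ioc_self)]
  exact ae_restrict_of_forall_mem measurableSet_Ioo hf

lemma betaMeasure_one_Ici {z s : ℝ} (hz : 0 < z) (hs : 0 ≤ s) (hs1 : s ≤ 1) :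
    betaMeasure 1 z (Ici s) = ENNReal.ofReal ((1 - s) ^ z) := by
  have hae : (Ici s ∩ Ioo 0 1 : Set ℝ) =ᵐ[volume] Ioo s 1 := by
    have : (Ici s ∩ Ioo 0 1 : Set ℝ) =ᵐ[volume] (Ioi s ∩ Ioo 0 1 : Set ℝ) :=
      Ioi_ae_eq_Ici.symm.inter (ae_eq_refl _)
    refine this.trans (Eventually.of_forall fun x => ?_)
    refine propext ⟨fun h => ⟨h.1, h.2.2⟩, fun h => ⟨h.1, hs.trans_lt h.1, h.2⟩⟩
  rw [betaMeasure_one_eq hz, withDensity_apply _ measurableSet_Ici,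
    Measure.restrict_restrict measurableSet_Ici, Measure.restrict_congr_set hae,
    lintegral_deriv (F := fun x => - (1 - x) ^ z) hs1]
  · simp [Real.zero_rpow hz.ne']
  · have : Continuous fun x : ℝ => (1 - x) ^ z :=
      (Real.continuous_rpow_const hz.le).comp (by fun_prop)
    exact this.neg.continuousOn
  · intro x hx
    have h := ((hasDerivAt_id x).const_sub 1).rpow_const (p := z) (Or.inl (sub_pos.2 hx.2).ne')
    convert! h.neg using 1
    simp
  · intro x hx
    have := Real.rpow_nonneg (sub_pos.2 hx.2).le (z - 1)
    positivity

/-- On `(0, 3/4)` the density of `Beta(1,z)` is bounded below by `z (1/4)^z`, hence so is the law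
of an affine image of a `Beta(1,z)` variable on the image of that interval. -/
lemma betaMeasure_one_affine {z x a : ℝ} (hz : 0 < z) (ha : a ≠ 0) (ha1 : |a| ≤ 1) {B : Set ℝ}
    (hB : MeasurableSet B) (hBI : ∀ l : ℝ, x + a * l ∈ B → l ∈ Ioo (0 : ℝ) (3 / 4)) :
    ENNReal.ofReal (z * (1 / 4) ^ z) * volume B ≤ betaMeasure 1 z {l | x + a * l ∈ B} := by
  set S : Set ℝ := {l | x + a * l ∈ B} with hS
  have hSm : MeasurableSet S := (by fun_prop : Measurable fun l : ℝ => x + a * l) hB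
  have hvol : volume B ≤ volume S := by
    have h1 : S = (fun l => a * l) ⁻¹' ((fun y => x + y) ⁻¹' B) := rfl
    rw [h1, Real.volume_preimage_mul_left ha, measure_preimage_add, abs_inv]
    refine le_mul_of_one_le_left (by positivity) ?_
    rw [← ENNReal.ofReal_one]
    exact ENNReal.ofReal_le_ofReal ((one_le_inv₀ (abs_pos.2 ha)).2 ha1)
  have hSI : S ⊆ Ioo 0 1 := fun l hl => ⟨(hBI l hl).1, (hBI l hl).2.trans (by norm_num)⟩
  rw [betaMeasure_one_eq hz, withDensity_apply _ hSm, Measure.restrict_restrict hSm,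
    inter_eq_left.2 hSI]
  calc _ ≤ ENNReal.ofReal (z * (1 / 4) ^ z) * volume S := by gcongr
    _ = ∫⁻ _ in S, ENNReal.ofReal (z * (1 / 4) ^ z) := by simp
    _ ≤ _ := by
      refine setLIntegral_mono' hSm fun l hl => ENNReal.ofReal_le_ofReal ?_
      obtain ⟨h0, h1⟩ := hBI l hl
      have h2 : (1 / 4 : ℝ) ^ z ≤ (1 - l) ^ z :=
        Real.rpow_le_rpow (by norm_num) (by linarith) hz.le
      -- Comparing with the exponent `z` covers both `z ≤ 1` and `z ≥ 1`.
      have h3 : (1 - l) ^ z ≤ (1 - l) ^ (z - 1) :=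
        Real.rpow_le_rpow_of_exponent_ge (by linarith) (by linarith) (by linarith)
      have := h2.trans h3
      gcongr

/-! ### Uniform ergodicity from a minorization -/

/-- One application of a kernel dominating `φ` on `[0,1]` maps functions with values in
`[m, m + r]` to functions with values in an interval of length `(1 - φ(ℝ)) r`, so the laws of two
copies of the chain agree up to `(1 - φ(ℝ))^n`. -/
lemma doeblin_iterate {κ : ℝ → Measure ℝ} (hκ : Measurable κ) (φ : Measure ℝ) [IsFiniteMeasure φ]
    (hP : ∀ x ∈ Icc (0 : ℝ) 1, κ x univ = 1)
    (hI : ∀ x ∈ Icc (0 : ℝ) 1, κ x (Icc 0 1)ᶜ = 0)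
    (hφ : ∀ x ∈ Icc (0 : ℝ) 1, φ ≤ κ x)
    (u v : ℕ → Measure ℝ) (hu : ∀ n, u (n + 1) = (u n).bind κ)
    (hv : ∀ n, v (n + 1) = (v n).bind κ) (hu1 : u 0 univ = 1) (hv1 : v 0 univ = 1)
    (hu0 : u 0 (Icc 0 1)ᶜ = 0) (hv0 : v 0 (Icc 0 1)ᶜ = 0) (n : ℕ) :
    ∀ (f : ℝ → ENNReal) (m r : ENNReal), Measurable f →
      (∀ x ∈ Icc (0 : ℝ) 1, m ≤ f x ∧ f x ≤ m + r) →
      ∃ m', (m' ≤ ∫⁻ x, f x ∂(u n) ∧ ∫⁻ x, f x ∂(u n) ≤ m' + (1 - φ univ) ^ n * r) ∧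
        (m' ≤ ∫⁻ x, f x ∂(v n) ∧ ∫⁻ x, f x ∂(v n) ≤ m' + (1 - φ univ) ^ n * r) := by
  have key : ∀ (ν : Measure ℝ) (f : ℝ → ENNReal) (m r : ENNReal), ν (Icc 0 1)ᶜ = 0 →
      (∀ x ∈ Icc (0 : ℝ) 1, m ≤ f x ∧ f x ≤ m + r) →
      m * ν univ ≤ ∫⁻ x, f x ∂ν ∧ ∫⁻ x, f x ∂ν ≤ (m + r) * ν univ := by
    intro ν f m r h0 hf
    have hae : ∀ᵐ x ∂ν, x ∈ Icc (0 : ℝ) 1 := h0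
    rw [← lintegral_const, ← lintegral_const]
    exact ⟨lintegral_mono_ae (hae.mono fun x hx => (hf x hx).1),
      lintegral_mono_ae (hae.mono fun x hx => (hf x hx).2)⟩
  induction n with
  | zero =>
    intro f m r _ hf
    refine ⟨m, ?_, ?_⟩
    · simpa [hu1] using key _ f m r hu0 hf
    · simpa [hv1] using key _ f m r hv0 hf
  | succ n ih =>
    intro f m r hfm hf
    rw [hu, hv, Measure.lintegral_bind hκ.aemeasurable hfm.aemeasurable,
      Measure.lintegral_bind hκ.aemeasurable hfm.aemeasurable]
    -- Split `κ x = φ + (κ x - φ)`: the first part does not depend on `x`, the second has mass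
    -- `1 - φ(ℝ)`.
    have := ih (fun x => ∫⁻ y, f y ∂(κ x)) (∫⁻ y, f y ∂φ + m * (1 - φ univ)) ((1 - φ univ) * r)
      ((Measure.measurable_lintegral hfm).comp hκ) ?_
    · simpa only [pow_succ, mul_assoc] using this
    · intro x hx
      have hdec := Measure.sub_add_cancel_of_le (hφ x hx)
      have hmass : (κ x - φ) univ = 1 - φ univ := by
        rw [Measure.sub_apply MeasurableSet.univ (hφ x hx), hP x hx]
      have h0 : (κ x - φ) (Icc 0 1)ᶜ = 0 :=
        le_antisymm ((Measure.sub_le (Icc 0 1)ᶜ).trans (hI x hx).le) (zero_le)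
      obtain ⟨h1, h2⟩ := key _ f m r h0 hf
      rw [hmass] at h1 h2
      have h3 : ∫⁻ y, f y ∂(κ x) = ∫⁻ y, f y ∂φ + ∫⁻ y, f y ∂(κ x - φ) := by
        conv_lhs => rw [← hdec]
        rw [lintegral_add_measure, add_comm]
      rw [h3]
      refine ⟨by gcongr, ?_⟩
      rw [add_assoc]
      gcongr
      refine h2.trans (le_of_eq ?_)
      ring

/-- Doeblin's theorem: if a kernel on `[0,1]` dominates a fixed nonzero measure, an invariant
probability measure is the only one, and the chain converges to it in total variation from every
starting point. -/
lemma doeblin_ergodic {κ : ℝ → Measure ℝ} (hκ : Measurable κ) (φ : Measure ℝ) [IsFiniteMeasure φ]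
    (hP : ∀ x ∈ Icc (0 : ℝ) 1, κ x univ = 1)
    (hI : ∀ x ∈ Icc (0 : ℝ) 1, κ x (Icc 0 1)ᶜ = 0)
    (hφ : ∀ x ∈ Icc (0 : ℝ) 1, φ ≤ κ x) (hφ0 : φ univ ≠ 0)
    (μ : Measure ℝ) [IsProbabilityMeasure μ] (hμ0 : μ (Icc 0 1)ᶜ = 0) (hμ : μ.bind κ = μ) :
    (∀ ν : Measure ℝ, IsProbabilityMeasure ν → ν (Icc 0 1) = 1 → ν.bind κ = ν → ν = μ) ∧
    (∀ x ∈ Icc (0 : ℝ) 1, Tendsto (fun n => tvDist (iterLaw κ x n) μ) atTop (nhds 0)) := by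
  set q : ENNReal := 1 - φ univ with hq
  have hq1 : q < 1 := ENNReal.sub_lt_self (by simp) (by simp) hφ0
  have hqt : q ≠ ⊤ := hq1.ne_top
  have hqr : q.toReal < 1 := by
    simpa using (ENNReal.toReal_lt_toReal hqt (by simp)).2 hq1
  have hlim : Tendsto (fun n => q.toReal ^ n) atTop (nhds 0) :=
    tendsto_pow_atTop_nhds_zero_of_lt_one ENNReal.toReal_nonneg hqr
  have main : ∀ u : ℕ → Measure ℝ, (∀ n, u (n + 1) = (u n).bind κ) → u 0 univ = 1 →
      u 0 (Icc 0 1)ᶜ = 0 → ∀ n, ∀ B : Set ℝ, MeasurableSet B →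
      |(u n B).toReal - (μ B).toReal| ≤ q.toReal ^ n := by
    intro u hu hu1 hu0 n B hB
    obtain ⟨m', ⟨h1, h2⟩, h3, h4⟩ := doeblin_iterate hκ φ hP hI hφ u (fun _ => μ) hu
      (fun _ => hμ.symm) hu1 measure_univ hu0 hμ0 n (B.indicator 1) 0 1
      (measurable_one.indicator hB)
      (fun x _ => ⟨zero_le, by
        rw [zero_add]; exact indicator_le_self' (fun _ _ => zero_le) x⟩)
    rw [lintegral_indicator_one hB] at h1 h2 h3 h4
    rw [mul_one, ← hq] at h2 h4
    have hm : m' ≠ ⊤ := (h3.trans_lt (measure_lt_top μ B)).ne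
    have hs : m' + q ^ n ≠ ⊤ := by simp [hm, hqt]
    have e : (m' + q ^ n).toReal = m'.toReal + q.toReal ^ n := by
      rw [ENNReal.toReal_add hm (by simp [hqt]), ENNReal.toReal_pow]
    have g1 := ENNReal.toReal_mono (h2.trans_lt hs.lt_top).ne h1
    have g2 := ENNReal.toReal_mono hs h2
    have g3 := ENNReal.toReal_mono (measure_ne_top μ B) h3
    have g4 := ENNReal.toReal_mono hs h4
    rw [e] at g2 g4
    rw [abs_le]
    constructor <;> linarith
  refine ⟨fun ν hν hν1 hνi => ?_, fun x hx => ?_⟩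
  · have hν0 : ν (Icc 0 1)ᶜ = 0 := (prob_compl_eq_zero_iff measurableSet_Icc).2 hν1
    ext B hB
    have h := main (fun _ => ν) (fun _ => hνi.symm) measure_univ hν0
    have h0 : |(ν B).toReal - (μ B).toReal| ≤ 0 :=
      ge_of_tendsto' hlim fun n => h n B hB
    exact (ENNReal.toReal_eq_toReal_iff' (measure_ne_top _ _) (measure_ne_top _ _)).1
      (sub_eq_zero.1 (abs_nonpos_iff.1 h0))
  · refine squeeze_zero (fun n => Real.iSup_nonneg fun B => abs_nonneg _) (fun n => ?_) hlim
    refine Real.iSup_le (fun B => ?_) (by positivity)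
    refine main (iterLaw κ x) (fun _ => rfl) (by simp [iterLaw]) ?_ n B.1 B.2
    simp [iterLaw, Measure.dirac_apply' _ measurableSet_Icc.compl, hx.1, hx.2]

/-! ### Invariance by flux balance and the form of the kernel -/

/-- If the mass carried downwards and upwards across every level `t` balance, `μ` is invariant. -/
lemma invariant_of_flux {κ : ℝ → Measure ℝ} (hκ : Measurable κ) (μ : Measure ℝ)
    [IsProbabilityMeasure μ] (hP : ∀ᵐ x ∂μ, κ x univ = 1)
    (h : ∀ t, ∫⁻ x in Iic t, κ x (Ioi t) ∂μ = ∫⁻ x in Ioi t, κ x (Iic t) ∂μ) :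
    μ.bind κ = μ := by
  have hm : ∀ B, MeasurableSet B → Measurable fun x => κ x B := fun B hB =>
    (Measure.measurable_coe hB).comp hκ
  have : IsProbabilityMeasure (μ.bind κ) := by
    constructor
    rw [Measure.bind_apply MeasurableSet.univ hκ.aemeasurable, lintegral_congr_ae hP]
    simp
  refine Measure.ext_of_Iic _ _ fun t => ?_
  rw [Measure.bind_apply measurableSet_Iic hκ.aemeasurable,
    ← lintegral_add_compl _ (measurableSet_Iic (a := t)), compl_Iic, ← h,
    ← lintegral_add_left (hm _ measurableSet_Iic)]
  have : ∀ᵐ x ∂(μ.restrict (Iic t)), κ x (Iic t) + κ x (Ioi t) = 1 := by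
    filter_upwards [ae_restrict_of_ae hP] with x hx
    rw [← compl_Iic, measure_add_measure_compl measurableSet_Iic, hx]
  rw [lintegral_congr_ae this]
  simp

lemma measurable_mcKernel (FL FR : Measure ℝ) [IsProbabilityMeasure FL] [IsProbabilityMeasure FR]
    {p : ℝ → ℝ} (hp : Measurable p) : Measurable (mcKernel FL FR p) := by
  have hg : Measurable fun y : ℝ × ℝ × ℝ × ℝ => if y.2.2.2 < p y.1 then y.1 - y.1 * y.2.1
      else y.1 + (1 - y.1) * y.2.2.1 :=
    Measurable.ite (measurableSet_lt (by fun_prop) (by fun_prop)) (by fun_prop) (by fun_prop)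
  refine Measure.measurable_of_measurable_coe _ fun B hB => ?_
  have : ∀ x, mcKernel FL FR p x B = (FL.prod (FR.prod (volume.restrict (Icc (0 : ℝ) 1))))
      (Prod.mk x ⁻¹' ((fun y : ℝ × ℝ × ℝ × ℝ => if y.2.2.2 < p y.1 then y.1 - y.1 * y.2.1
      else y.1 + (1 - y.1) * y.2.2.1) ⁻¹' B)) := by
    intro x
    exact Measure.map_apply (hg.comp measurable_prodMk_left) hB
  simp_rw [this]
  exact measurable_measure_prodMk_left (hg hB)

/-- The kernel is a mixture of its left-moving and right-moving parts. -/
lemma mcKernel_apply (FL FR : Measure ℝ) [IsProbabilityMeasure FL] [IsProbabilityMeasure FR]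
    {p : ℝ → ℝ} {x : ℝ} (h0 : 0 ≤ p x) (h1 : p x ≤ 1) {B : Set ℝ}
    (hB : MeasurableSet B) :
    mcKernel FL FR p x B = ENNReal.ofReal (p x) * FL {l | x + -x * l ∈ B} +
      ENNReal.ofReal (1 - p x) * FR {r | x + (1 - x) * r ∈ B} := by
  have hg : Measurable fun w : ℝ × ℝ × ℝ => if w.2.2 < p x then x - x * w.1
      else x + (1 - x) * w.2.1 :=
    Measurable.ite (measurableSet_lt (by fun_prop) (by fun_prop)) (by fun_prop) (by fun_prop)
  have hl : MeasurableSet {l | x + -x * l ∈ B} :=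
    (by fun_prop : Measurable fun l : ℝ => x + -x * l) hB
  have hr : MeasurableSet {r | x + (1 - x) * r ∈ B} :=
    (by fun_prop : Measurable fun r : ℝ => x + (1 - x) * r) hB
  have hset : (fun w : ℝ × ℝ × ℝ => if w.2.2 < p x then x - x * w.1
      else x + (1 - x) * w.2.1) ⁻¹' B =
      ({l | x + -x * l ∈ B} ×ˢ (univ ×ˢ Iio (p x))) ∪
      (univ ×ˢ ({r | x + (1 - x) * r ∈ B} ×ˢ Ici (p x))) := by
    ext ⟨l, r, u⟩
    by_cases hu : u < p x
    · simp [hu, sub_eq_add_neg]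
    · simp [hu, not_lt.1 hu]
  have v1 : (volume.restrict (Icc (0 : ℝ) 1)) (Iio (p x)) = ENNReal.ofReal (p x) := by
    rw [Measure.restrict_apply measurableSet_Iio]
    have : (Iio (p x) ∩ Icc 0 1 : Set ℝ) = Ico 0 (p x) := by
      ext u
      exact ⟨fun h => ⟨h.2.1, h.1⟩, fun h => ⟨h.2, h.1, h.2.le.trans h1⟩⟩
    rw [this, Real.volume_Ico, sub_zero]
  have v2 : (volume.restrict (Icc (0 : ℝ) 1)) (Ici (p x)) = ENNReal.ofReal (1 - p x) := by
    rw [Measure.restrict_apply measurableSet_Ici]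
    have : (Ici (p x) ∩ Icc 0 1 : Set ℝ) = Icc (p x) 1 := by
      ext u
      exact ⟨fun h => ⟨h.1, h.2.2⟩, fun h => ⟨h.1, h0.trans h.1, h.2⟩⟩
    rw [this, Real.volume_Icc]
  rw [mcKernel, Measure.map_apply hg hB, hset, measure_union _
    (MeasurableSet.univ.prod (hr.prod measurableSet_Ici)),
    Measure.prod_prod, Measure.prod_prod, Measure.prod_prod, Measure.prod_prod, v1, v2]
  · simp [mul_comm]
  · rw [Set.disjoint_left]
    rintro ⟨l, r, u⟩ ⟨_, _, h⟩ ⟨_, _, h'⟩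
    exact (not_lt.2 (show p x ≤ u from h')) h

lemma betaMeasure_one_Ioi {z s : ℝ} (hz : 0 < z) (hs : 0 ≤ s) (hs1 : s ≤ 1) :
    betaMeasure 1 z (Ioi s) = ENNReal.ofReal ((1 - s) ^ z) := by
  rw [← betaMeasure_one_Ici hz hs hs1]
  exact measure_congr ((withDensity_absolutelyContinuous _ _).ae_eq Ioi_ae_eq_Ici)

/-! ### The chain with linear `p` and `Beta(1,z)` jumps -/

section Chain

variable {z b c : ℝ} {p : ℝ → ℝ}

lemma p_mem (hb : b ∈ Ioc (0 : ℝ) 1) (hc : c ∈ Ioc (0 : ℝ) 1)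
    (hp : ∀ x : ℝ, p x = c * x + (1 - b) * (1 - x)) {x : ℝ} (hx : x ∈ Icc (0 : ℝ) 1) :
    c * x ≤ p x ∧ b * (1 - x) ≤ 1 - p x ∧ 0 ≤ p x ∧ p x ≤ 1 := by
  obtain ⟨hb0, hb1⟩ := hb
  obtain ⟨hc0, hc1⟩ := hc
  obtain ⟨hx0, hx1⟩ := hx
  have h1 : 0 ≤ (1 - b) * (1 - x) := mul_nonneg (by linarith) (by linarith)
  have h2 : 0 ≤ (1 - c) * x := mul_nonneg (by linarith) hx0
  have h3 : 0 ≤ c * x := by positivity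
  have h4 : 0 ≤ b * (1 - x) := mul_nonneg hb0.le (by linarith)
  rw [hp]
  refine ⟨by linarith, by linarith, by linarith, by linarith⟩

lemma beta_null {a b : ℝ} (ha : 0 < a) (hb : 0 < b) {S : Set ℝ}
    (hS : ∀ l ∈ Ioo (0 : ℝ) 1, l ∉ S) : betaMeasure a b S = 0 :=
  measure_mono_null (fun l hl hl' => hS l hl' hl) (betaMeasure_compl ha hb)

/-- A set missed by all moves with jump proportion in `(0, 1)` has probability zero. -/
lemma mcKernel_null (hz : 0 < z) {x : ℝ} (h0 : 0 ≤ p x) (h1 : p x ≤ 1) {B : Set ℝ}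
    (hB : MeasurableSet B)
    (h : ∀ l ∈ Ioo (0 : ℝ) 1, x + -x * l ∉ B ∧ x + (1 - x) * l ∉ B) :
    mcKernel (betaMeasure 1 z) (betaMeasure 1 z) p x B = 0 := by
  have := isProbabilityMeasure_beta one_pos hz
  rw [mcKernel_apply _ _ h0 h1 hB, beta_null one_pos hz (S := {l | x + -x * l ∈ B})
    fun l hl => (h l hl).1,
    beta_null one_pos hz (S := {r | x + (1 - x) * r ∈ B}) fun l hl => (h l hl).2]
  simp

lemma mcKernel_univ (hz : 0 < z) {x : ℝ} (h0 : 0 ≤ p x) (h1 : p x ≤ 1) :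
    mcKernel (betaMeasure 1 z) (betaMeasure 1 z) p x univ = 1 := by
  have := isProbabilityMeasure_beta one_pos hz
  rw [mcKernel_apply _ _ h0 h1 MeasurableSet.univ]
  simp only [mem_univ, ofPred_true, measure_univ, mul_one]
  rw [← ENNReal.ofReal_add h0 (by linarith)]
  simp

lemma mcKernel_compl_Icc (hz : 0 < z) {x : ℝ} (hx : x ∈ Icc (0 : ℝ) 1) (h0 : 0 ≤ p x)
    (h1 : p x ≤ 1) : mcKernel (betaMeasure 1 z) (betaMeasure 1 z) p x (Icc 0 1)ᶜ = 0 := by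
  refine mcKernel_null hz h0 h1 measurableSet_Icc.compl fun l hl => ?_
  obtain ⟨hx0, hx1⟩ := hx
  obtain ⟨hl0, hl1⟩ := hl
  simp only [mem_compl_iff, not_not, mem_Icc]
  refine ⟨⟨?_, ?_⟩, ?_, ?_⟩ <;> nlinarith

lemma mcKernel_compl_Ioo (hz : 0 < z) {x : ℝ} (hx : x ∈ Ioo (0 : ℝ) 1) (h0 : 0 ≤ p x)
    (h1 : p x ≤ 1) : mcKernel (betaMeasure 1 z) (betaMeasure 1 z) p x (Ioo 0 1)ᶜ = 0 := by
  refine mcKernel_null hz h0 h1 measurableSet_Ioo.compl fun l hl => ?_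
  obtain ⟨hx0, hx1⟩ := hx
  obtain ⟨hl0, hl1⟩ := hl
  simp only [mem_compl_iff, not_not, mem_Ioo]
  refine ⟨⟨?_, ?_⟩, ?_, ?_⟩ <;> nlinarith

/-- Down-jump probability below the level `t`: a left move from `x` lands at `x (1 - L)`, and
`P(1 - L ≤ t / x) = (t / x)^z`. -/
lemma mcKernel_Iic (hz : 0 < z) {x t : ℝ} (ht : 0 < t) (htx : t < x) (hx : x < 1)
    (h0 : 0 ≤ p x) (h1 : p x ≤ 1) :
    mcKernel (betaMeasure 1 z) (betaMeasure 1 z) p x (Iic t) =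
      ENNReal.ofReal (p x * (t / x) ^ z) := by
  have := isProbabilityMeasure_beta one_pos hz
  have hx0 : 0 < x := ht.trans htx
  have e : {l | x + -x * l ∈ Iic t} = Ici (1 - t / x) := by
    ext l
    simp only [mem_ofPred_eq, mem_Iic, mem_Ici]
    rw [sub_le_comm, le_div_iff₀ hx0]
    constructor <;> intro h <;> linarith
  have hd0 : 0 ≤ t / x := by positivity
  have hd1 : t / x ≤ 1 := (div_le_one hx0).2 htx.le
  rw [mcKernel_apply _ _ h0 h1 measurableSet_Iic, e, betaMeasure_one_Ici hz (by linarith)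
    (by linarith), beta_null one_pos hz, mul_zero, add_zero, ← ENNReal.ofReal_mul h0,
    sub_sub_cancel]
  intro l hl hl'
  have : x + (1 - x) * l ≤ t := hl'
  have : 0 < (1 - x) * l := mul_pos (by linarith) hl.1
  linarith

/-- Up-jump probability above the level `t`: a right move sends `1 - x` to `(1 - x) (1 - R)`. -/
lemma mcKernel_Ioi (hz : 0 < z) {x t : ℝ} (hx : 0 < x) (htx : x ≤ t) (ht : t < 1)
    (h0 : 0 ≤ p x) (h1 : p x ≤ 1) :
    mcKernel (betaMeasure 1 z) (betaMeasure 1 z) p x (Ioi t) =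
      ENNReal.ofReal ((1 - p x) * ((1 - t) / (1 - x)) ^ z) := by
  have := isProbabilityMeasure_beta one_pos hz
  have hx0 : 0 < 1 - x := by linarith
  have e : {l | x + (1 - x) * l ∈ Ioi t} = Ioi (1 - (1 - t) / (1 - x)) := by
    ext l
    simp only [mem_ofPred_eq, mem_Ioi]
    rw [sub_lt_comm, lt_div_iff₀ hx0]
    constructor <;> intro h <;> linarith
  have hd0 : 0 ≤ (1 - t) / (1 - x) := div_nonneg (by linarith) hx0.le
  have hd1 : (1 - t) / (1 - x) ≤ 1 := (div_le_one hx0).2 (by linarith)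
  rw [mcKernel_apply _ _ h0 h1 measurableSet_Ioi, e, betaMeasure_one_Ioi hz (by linarith)
    (by linarith), beta_null one_pos hz, mul_zero, zero_add,
    ← ENNReal.ofReal_mul (by linarith), sub_sub_cancel]
  intro l hl hl'
  have : t < x + -x * l := hl'
  have : 0 < x * l := mul_pos hx hl.1
  linarith

/-- Doeblin minorization: from any point of `[0,1]` the chain lands in `(1/4, 3/4)` with density
bounded below by one and the same constant. -/
lemma mcKernel_doeblin (hz : 0 < z) (hb : b ∈ Ioc (0 : ℝ) 1) (hc : c ∈ Ioc (0 : ℝ) 1)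
    (hp : ∀ x : ℝ, p x = c * x + (1 - b) * (1 - x)) {x : ℝ} (hx : x ∈ Icc (0 : ℝ) 1) :
    ENNReal.ofReal (min b c / 4 * (z * (1 / 4) ^ z)) • volume.restrict (Ioo (1 / 4 : ℝ) (3 / 4)) ≤
      mcKernel (betaMeasure 1 z) (betaMeasure 1 z) p x := by
  have := isProbabilityMeasure_beta one_pos hz
  obtain ⟨hpl, hpr, h0, h1⟩ := p_mem hb hc hp hx
  obtain ⟨hx0, hx1⟩ := hx
  have hm : 0 < min b c := lt_min hb.1 hc.1
  refine Measure.le_iff.2 fun B hB => ?_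
  set I := Ioo (1 / 4 : ℝ) (3 / 4) with hI
  have hBI : MeasurableSet (B ∩ I) := hB.inter measurableSet_Ioo
  have hcover : volume (B ∩ I) ≤ volume (B ∩ I ∩ Iio x) + volume (B ∩ I ∩ Ioi x) := by
    calc volume (B ∩ I) ≤ volume ((B ∩ I ∩ Iio x ∪ B ∩ I ∩ Ioi x) ∪ {x}) := by
          refine measure_mono fun y hy => ?_
          rcases lt_trichotomy y x with h | h | h
          · exact Or.inl (Or.inl ⟨hy, h⟩)
          · exact Or.inr h
          · exact Or.inl (Or.inr ⟨hy, h⟩)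
      _ ≤ volume (B ∩ I ∩ Iio x ∪ B ∩ I ∩ Ioi x) + volume {x} := measure_union_le _ _
      _ ≤ _ := by
        rw [Real.volume_singleton, add_zero]
        exact measure_union_le _ _
  rw [Measure.smul_apply, Measure.restrict_apply hB, smul_eq_mul, mcKernel_apply _ _ h0 h1 hB]
  refine (mul_le_mul_right hcover _).trans ?_
  rw [mul_add, ENNReal.ofReal_mul (by positivity), mul_assoc, mul_assoc]
  refine add_le_add ?_ ?_
    -- The part of `B` below `x` is reached by left moves; it is empty unless `1/4 < x`, and then
    -- the probability `p x ≥ c x` of a left move is at least `c / 4`.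
  · by_cases hx4 : x ≤ 1 / 4
    · have : B ∩ I ∩ Iio x = ∅ :=
        eq_empty_of_forall_notMem fun y hy => absurd (hy.1.2.1.trans hy.2) (not_lt.2 hx4)
      simp [this]
    · push Not at hx4
      refine mul_le_mul' (ENNReal.ofReal_le_ofReal ?_)
        ((betaMeasure_one_affine hz (x := x) (a := -x) (by linarith [hx4])
          (by rw [abs_neg, abs_of_nonneg hx0]; exact hx1) (hBI.inter measurableSet_Iio) ?_).trans
          (measure_mono fun l hl => hl.1.1))
      · have := min_le_right b c
        nlinarith [hc.1]
      · rintro l ⟨⟨_, h2, _⟩, h4⟩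
        have h4' : x + -x * l < x := h4
        have hl : 0 < l := by
          by_contra! h
          nlinarith
        exact ⟨hl, by by_contra! h; nlinarith⟩
    -- The part of `B` above `x` is reached by right moves, which have probability at least `b / 4`
    -- when `x < 3/4`.
  · by_cases hx4 : 3 / 4 ≤ x
    · have : B ∩ I ∩ Ioi x = ∅ :=
        eq_empty_of_forall_notMem fun y hy => absurd (hy.2.trans hy.1.2.2) (not_lt.2 hx4)
      simp [this]
    · push Not at hx4
      refine mul_le_mul' (ENNReal.ofReal_le_ofReal ?_)
        ((betaMeasure_one_affine hz (x := x) (a := 1 - x) (by linarith [hx4])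
          (by rw [abs_of_nonneg (by linarith)]; linarith) (hBI.inter measurableSet_Ioi) ?_).trans
          (measure_mono fun l hl => hl.1.1))
      · have := min_le_left b c
        nlinarith [hb.1]
      · rintro l ⟨⟨_, _, h2⟩, h4⟩
        have h4' : x < x + (1 - x) * l := h4
        have hl : 0 < l := by
          by_contra! h
          nlinarith
        exact ⟨hl, by by_contra! h; nlinarith⟩

lemma hasDerivAt_pow_mul_pow (α β : ℝ) {x : ℝ} (hx : x ∈ Ioo (0 : ℝ) 1) :
    HasDerivAt (fun x : ℝ => x ^ α * (1 - x) ^ β)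
      (x ^ (α - 1) * (1 - x) ^ (β - 1) * (α * (1 - x) - β * x)) x := by
  have h1 := (hasDerivAt_id x).rpow_const (p := α) (Or.inl hx.1.ne')
  have h2 := ((hasDerivAt_id x).const_sub 1).rpow_const (p := β) (Or.inl (sub_pos.2 hx.2).ne')
  convert! h1.mul h2 using 1
  have e1 : x ^ α = x ^ (α - 1) * x := by
    rw [Real.rpow_sub_one hx.1.ne', div_mul_cancel₀ _ hx.1.ne']
  have e2 : (1 - x) ^ β = (1 - x) ^ (β - 1) * (1 - x) := by
    rw [Real.rpow_sub_one (sub_pos.2 hx.2).ne', div_mul_cancel₀ _ (sub_pos.2 hx.2).ne']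
  simp only [id]
  rw [e1, e2]
  ring

/-- Downward mass flow of `Beta(bz, cz)` across the level `t`: up to a constant, the integrand is
the derivative of `-x^((b-1)z) (1-x)^(cz)`. -/
lemma flux_down (hz : 0 < z) (hb : b ∈ Ioc (0 : ℝ) 1) (hc : c ∈ Ioc (0 : ℝ) 1)
    (hp : ∀ x : ℝ, p x = c * x + (1 - b) * (1 - x))
    (hκ : Measurable (mcKernel (betaMeasure 1 z) (betaMeasure 1 z) p)) {t : ℝ} (ht : 0 < t)
    (ht1 : t < 1) :
    ∫⁻ x in Ioi t, mcKernel (betaMeasure 1 z) (betaMeasure 1 z) p x (Iic t)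
      ∂(betaMeasure (b * z) (c * z)) =
    ENNReal.ofReal (t ^ (b * z) * (1 - t) ^ (c * z) / (z * ProbabilityTheory.beta (b * z) (c * z)))
    := by
  have hbz : 0 < b * z := mul_pos hb.1 hz
  have hcz : 0 < c * z := mul_pos hc.1 hz
  set β := ProbabilityTheory.beta (b * z) (c * z) with hβ
  have hβ0 : 0 < β := ProbabilityTheory.beta_pos hbz hcz
  have hset : (Ioi t ∩ Ioo 0 1 : Set ℝ) = Ioo t 1 := by
    ext x
    exact ⟨fun h => ⟨h.1, h.2.2⟩, fun h => ⟨h.1, ht.trans h.1, h.2⟩⟩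
  rw [betaMeasure_eq hbz hcz, setLIntegral_withDensity_eq_setLIntegral_mul _ (by fun_prop)
    (show Measurable fun x => mcKernel (betaMeasure 1 z) (betaMeasure 1 z) p x (Iic t) from
      (Measure.measurable_coe measurableSet_Iic).comp hκ) measurableSet_Ioi, ← hβ,
    Measure.restrict_restrict measurableSet_Ioi, hset]
  have hcongr : ∀ x ∈ Ioo t 1, ENNReal.ofReal (x ^ (b * z - 1) * (1 - x) ^ (c * z - 1) / β) *
      mcKernel (betaMeasure 1 z) (betaMeasure 1 z) p x (Iic t) =
      ENNReal.ofReal (x ^ (b * z - 1) * (1 - x) ^ (c * z - 1) / β * (p x * (t / x) ^ z)) := by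
    intro x hx
    have hx0 := ht.trans hx.1
    obtain ⟨-, -, h0, h1⟩ := p_mem hb hc hp ⟨hx0.le, hx.2.le⟩
    have := sub_pos.2 hx.2
    rw [mcKernel_Iic hz ht hx.1 hx.2 h0 h1, ← ENNReal.ofReal_mul (by positivity)]
  simp only [Pi.mul_apply]
  rw [setLIntegral_congr_fun measurableSet_Ioo hcongr,
    lintegral_deriv (F := fun x => -(t ^ z / (z * β)) * (x ^ ((b - 1) * z) * (1 - x) ^ (c * z)))
      ht1.le]
  · congr 1
    have e : t ^ (b * z) = t ^ z * t ^ ((b - 1) * z) := by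
      rw [← Real.rpow_add ht]; congr 1; ring
    rw [e, sub_self, Real.zero_rpow hcz.ne']
    ring
  · refine ContinuousOn.mul continuousOn_const (ContinuousOn.mul ?_ ?_)
    · exact fun x hx => (Real.continuousAt_rpow_const _ _
        (Or.inl (ht.trans_le hx.1).ne')).continuousWithinAt
    · exact ((Real.continuous_rpow_const hcz.le).comp (by fun_prop)).continuousOn
  · intro x hx
    have hx0 := ht.trans hx.1
    have := (hasDerivAt_pow_mul_pow ((b - 1) * z) (c * z) ⟨hx0, hx.2⟩).const_mul
      (-(t ^ z / (z * β)))
    convert! this using 1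
    have e : x ^ (b * z - 1) = x ^ z * x ^ ((b - 1) * z - 1) := by
      rw [← Real.rpow_add hx0]; congr 1; ring
    have : x ^ z ≠ 0 := (Real.rpow_pos_of_pos hx0 z).ne'
    rw [e, Real.div_rpow ht.le hx0.le, hp]
    field_simp
    ring
  · intro x hx
    have hx0 := ht.trans hx.1
    obtain ⟨-, -, h0, h1⟩ := p_mem hb hc hp ⟨hx0.le, hx.2.le⟩
    have := sub_pos.2 hx.2
    positivity

/-- Upward mass flow of `Beta(bz, cz)` across the level `t`: up to a constant, the integrand is
the derivative of `x^(bz) (1-x)^((c-1)z)`. The value is that of `flux_down`. -/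
lemma flux_up (hz : 0 < z) (hb : b ∈ Ioc (0 : ℝ) 1) (hc : c ∈ Ioc (0 : ℝ) 1)
    (hp : ∀ x : ℝ, p x = c * x + (1 - b) * (1 - x))
    (hκ : Measurable (mcKernel (betaMeasure 1 z) (betaMeasure 1 z) p)) {t : ℝ} (ht : 0 < t)
    (ht1 : t < 1) :
    ∫⁻ x in Iic t, mcKernel (betaMeasure 1 z) (betaMeasure 1 z) p x (Ioi t)
      ∂(betaMeasure (b * z) (c * z)) =
    ENNReal.ofReal (t ^ (b * z) * (1 - t) ^ (c * z) / (z * ProbabilityTheory.beta (b * z) (c * z)))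
    := by
  have hbz : 0 < b * z := mul_pos hb.1 hz
  have hcz : 0 < c * z := mul_pos hc.1 hz
  set β := ProbabilityTheory.beta (b * z) (c * z) with hβ
  have hβ0 : 0 < β := ProbabilityTheory.beta_pos hbz hcz
  have hset : (Iic t ∩ Ioo 0 1 : Set ℝ) = Ioc 0 t := by
    ext x
    exact ⟨fun h => ⟨h.2.1, h.1⟩, fun h => ⟨h.2, h.1, h.2.trans_lt ht1⟩⟩
  rw [betaMeasure_eq hbz hcz, setLIntegral_withDensity_eq_setLIntegral_mul _ (by fun_prop)
    (show Measurable fun x => mcKernel (betaMeasure 1 z) (betaMeasure 1 z) p x (Ioi t) from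
      (Measure.measurable_coe measurableSet_Ioi).comp hκ) measurableSet_Iic, ← hβ,
    Measure.restrict_restrict measurableSet_Iic, hset,
    ← Measure.restrict_congr_set Ioo_ae_eq_Ioc]
  have hcongr : ∀ x ∈ Ioo 0 t, ENNReal.ofReal (x ^ (b * z - 1) * (1 - x) ^ (c * z - 1) / β) *
      mcKernel (betaMeasure 1 z) (betaMeasure 1 z) p x (Ioi t) =
      ENNReal.ofReal (x ^ (b * z - 1) * (1 - x) ^ (c * z - 1) / β *
        ((1 - p x) * ((1 - t) / (1 - x)) ^ z)) := by
    intro x hx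
    have hx1 := hx.2.trans ht1
    obtain ⟨-, -, h0, h1⟩ := p_mem hb hc hp ⟨hx.1.le, hx1.le⟩
    have := sub_pos.2 hx1
    have := hx.1
    rw [mcKernel_Ioi hz hx.1 hx.2.le ht1 h0 h1, ← ENNReal.ofReal_mul (by positivity)]
  have ht' := sub_pos.2 ht1
  simp only [Pi.mul_apply]
  rw [setLIntegral_congr_fun measurableSet_Ioo hcongr,
    lintegral_deriv (F := fun x => (1 - t) ^ z / (z * β) *
      (x ^ (b * z) * (1 - x) ^ ((c - 1) * z))) ht.le]
  · congr 1
    have e : (1 - t) ^ (c * z) = (1 - t) ^ z * (1 - t) ^ ((c - 1) * z) := by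
      rw [← Real.rpow_add ht']; congr 1; ring
    rw [e, Real.zero_rpow hbz.ne']
    ring
  · refine ContinuousOn.mul continuousOn_const (ContinuousOn.mul ?_ ?_)
    · exact (Real.continuous_rpow_const hbz.le).continuousOn
    · intro x hx
      refine ContinuousAt.continuousWithinAt ?_
      exact ContinuousAt.rpow_const (by fun_prop) (Or.inl (by linarith [hx.2]))
  · intro x hx
    have hx1 := sub_pos.2 (hx.2.trans ht1)
    have := (hasDerivAt_pow_mul_pow (b * z) ((c - 1) * z) ⟨hx.1, hx.2.trans ht1⟩).const_mul
      ((1 - t) ^ z / (z * β))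
    convert! this using 1
    have e : (1 - x) ^ (c * z - 1) = (1 - x) ^ z * (1 - x) ^ ((c - 1) * z - 1) := by
      rw [← Real.rpow_add hx1]; congr 1; ring
    have : (1 - x) ^ z ≠ 0 := (Real.rpow_pos_of_pos hx1 z).ne'
    rw [e, Real.div_rpow ht'.le hx1.le, hp]
    field_simp
    ring
  · intro x hx
    have hx1 := hx.2.trans ht1
    obtain ⟨-, -, h0, h1⟩ := p_mem hb hc hp ⟨hx.1.le, hx1.le⟩
    have := sub_pos.2 hx1
    have := hx.1
    have := sub_nonneg.2 h1
    positivity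

lemma beta_invariant (hz : 0 < z) (hb : b ∈ Ioc (0 : ℝ) 1) (hc : c ∈ Ioc (0 : ℝ) 1)
    (hp : ∀ x : ℝ, p x = c * x + (1 - b) * (1 - x))
    (hκ : Measurable (mcKernel (betaMeasure 1 z) (betaMeasure 1 z) p)) :
    (betaMeasure (b * z) (c * z)).bind (mcKernel (betaMeasure 1 z) (betaMeasure 1 z) p) =
      betaMeasure (b * z) (c * z) := by
  have hbz : 0 < b * z := mul_pos hb.1 hz
  have hcz : 0 < c * z := mul_pos hc.1 hz
  have := isProbabilityMeasure_beta hbz hcz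
  have hae : ∀ᵐ x ∂(betaMeasure (b * z) (c * z)), x ∈ Ioo (0 : ℝ) 1 := betaMeasure_compl hbz hcz
  have hnull : ∀ B : Set ℝ, B ⊆ (Ioo 0 1)ᶜ → ∀ S : Set ℝ,
      ∫⁻ x in S, mcKernel (betaMeasure 1 z) (betaMeasure 1 z) p x B
        ∂(betaMeasure (b * z) (c * z)) = 0 := by
    intro B hB S
    rw [← lintegral_zero (μ := (betaMeasure (b * z) (c * z)).restrict S)]
    refine lintegral_congr_ae ?_
    filter_upwards [ae_restrict_of_ae hae] with x hx
    obtain ⟨-, -, h0, h1⟩ := p_mem hb hc hp (Ioo_subset_Icc_self hx)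
    exact measure_mono_null hB (mcKernel_compl_Ioo hz hx h0 h1)
  refine invariant_of_flux hκ _ ?_ fun t => ?_
  · filter_upwards [hae] with x hx
    obtain ⟨-, -, h0, h1⟩ := p_mem hb hc hp (Ioo_subset_Icc_self hx)
    exact mcKernel_univ hz h0 h1
    -- Neither flow can cross a level outside `(0, 1)`.
  · rcases le_or_gt t 0 with ht | ht
    · have hI : Iic t ⊆ (Ioo 0 1)ᶜ := fun x hx hx' => absurd hx'.1 (not_lt.2 (le_trans hx ht))
      rw [hnull _ hI, setLIntegral_measure_zero _ _
        (measure_mono_null hI (betaMeasure_compl hbz hcz))]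
    rcases le_or_gt 1 t with ht1 | ht1
    · have hI : Ioi t ⊆ (Ioo 0 1)ᶜ := fun x hx hx' => absurd (ht1.trans_lt hx) (not_lt.2 hx'.2.le)
      rw [hnull _ hI, setLIntegral_measure_zero _ _
        (measure_mono_null hI (betaMeasure_compl hbz hcz))]
    rw [flux_up hz hb hc hp hκ ht ht1, flux_down hz hb hc hp hκ ht ht1]

end Chain

/-! ### Ergodicity -/

/-- For linear `p(x) = cx + (1-b)(1-x)` with `b, c ∈ (0,1]` and `F_L = F_R = Beta(1,z)`,
`z > 0`, the chain is ergodic with stationary distribution `Beta(bz, cz)`. -/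
theorem stmt13 (z b c : ℝ) (hz : 0 < z) (hb : b ∈ Ioc (0 : ℝ) 1) (hc : c ∈ Ioc (0 : ℝ) 1)
    (p : ℝ → ℝ) (hp : ∀ x : ℝ, p x = c * x + (1 - b) * (1 - x))
    (FL FR : Measure ℝ) (hFL : FL = betaMeasure 1 z) (hFR : FR = betaMeasure 1 z) :
    ∃ μ : Measure ℝ, IsProbabilityMeasure μ ∧ μ (Icc 0 1) = 1 ∧
      μ.bind (mcKernel FL FR p) = μ ∧
      (∀ ν : Measure ℝ, IsProbabilityMeasure ν → ν (Icc 0 1) = 1 →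
        ν.bind (mcKernel FL FR p) = ν → ν = μ) ∧
      (∀ x ∈ Icc (0 : ℝ) 1,
        Tendsto (fun n => tvDist (iterLaw (mcKernel FL FR p) x n) μ) atTop (nhds 0)) ∧
      μ = betaMeasure (b * z) (c * z) := by
  subst hFL hFR
  have hbz : 0 < b * z := mul_pos hb.1 hz
  have hcz : 0 < c * z := mul_pos hc.1 hz
  have := isProbabilityMeasure_beta one_pos hz
  have hμ := isProbabilityMeasure_beta hbz hcz
  have hpm : Measurable p := by
    rw [funext hp]
    fun_prop
  have hκ := measurable_mcKernel (betaMeasure 1 z) (betaMeasure 1 z) hpm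
  have hμ0 : betaMeasure (b * z) (c * z) (Icc 0 1)ᶜ = 0 :=
    beta_null hbz hcz fun l hl h => h (Ioo_subset_Icc_self hl)
  have hinv := beta_invariant hz hb hc hp hκ
  have hε : 0 < min b c / 4 * (z * (1 / 4) ^ z) := by
    have := lt_min hb.1 hc.1
    positivity
  let φ : Measure ℝ := ENNReal.ofReal (min b c / 4 * (z * (1 / 4) ^ z)) •
    volume.restrict (Ioo (1 / 4 : ℝ) (3 / 4))
  have hφm : φ univ = ENNReal.ofReal (min b c / 4 * (z * (1 / 4) ^ z)) *
      ENNReal.ofReal (3 / 4 - 1 / 4) := by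
    simp only [φ, Measure.smul_apply, Measure.restrict_apply_univ, Real.volume_Ioo, smul_eq_mul]
  have hφf : IsFiniteMeasure φ := ⟨by
    rw [hφm]; exact ENNReal.mul_lt_top ENNReal.ofReal_lt_top ENNReal.ofReal_lt_top⟩
  have hφ0 : φ univ ≠ 0 := by
    rw [hφm]
    exact mul_ne_zero (ENNReal.ofReal_pos.2 hε).ne' (ENNReal.ofReal_pos.2 (by norm_num)).ne'
  obtain ⟨huniq, hconv⟩ := doeblin_ergodic hκ φ
    (fun x hx => mcKernel_univ hz (p_mem hb hc hp hx).2.2.1 (p_mem hb hc hp hx).2.2.2)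
    (fun x hx => mcKernel_compl_Icc hz hx (p_mem hb hc hp hx).2.2.1 (p_mem hb hc hp hx).2.2.2)
    (fun x hx => mcKernel_doeblin hz hb hc hp hx) hφ0 _ hμ0 hinv
  exact ⟨_, hμ, (prob_compl_eq_zero_iff measurableSet_Icc).1 hμ0, hinv, huniq, hconv, rfl⟩
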